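/- For every u ∈ C_0^∞(ℝ³;ℝ³) with spherical-mean decomposition u = ū + v, the bilinear form B*(u,u) := (α/2)∫(v_j ∂_k v_k − v_k ∂_k v_j)∂_iΦ_ij dx + ∫(∂_k u_i ∂_k u_j + α ∂_k u_k ∂_i u_j)Φ_ij dx equals c_α ∫_{ℝ³} { (α/(α+2)) r^{−2} [ v_k (∂_k v)·ω − (div v)(v·ω) ] + r^{−1} [ |D_r ū|² + α((2α+3)/(α+2)) Σ_i (D_r ū_i)² ω_i² + |Dv|² + α (div v)² + (α/(α+2)) Σ_k |(∂_k v)·ω|² + (α²/(α+2)) (div v)(ω_i (∂_i v)·ω) + α((3α+4)/(α+2)) (D_r ū·ω)(div v) + α (D_r ū·ω)(ω_i (∂_i v)·ω) ] } dx, with summation over repeated indices. -/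

import Mathlib

/-!
Away from the origin both sides can be compared pointwise. Put `β = α / (α + 2)`, `dᵢ = D_r ūᵢ` and
`ω = x / |x|`, so that `Φᵢⱼ = c_α r⁻¹ (δᵢⱼ + β ωᵢ ωⱼ)`.

* `pd_Phi` gives `Σᵢ ∂ᵢ Φᵢⱼ = c_α (β - 1) r⁻² ωⱼ`, and `α (β - 1) / 2 = -β`; hence the first integrand
  equals the `r⁻²` part of the polar formula (`first_order_expansion`).
* Substituting `∂ₖ uᵢ = ∂ₖ vᵢ + dᵢ ωₖ` (`pd_component`) into the second integrand gives the `r⁻¹` part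
  of the polar formula plus two remainders (`quadratic_expansion`): `2 r⁻¹ Σᵢ dᵢ ∂ᵣ vᵢ`, and a
  constant times `r⁻¹ Σ_{i ≠ j} dᵢ dⱼ ωᵢ ωⱼ`.

Both remainders integrate to zero. For the first, differentiation under the integral sign
(`hasDerivAt_sphInt`) shows that `∂ᵣ vᵢ` has zero mean on every sphere centred at the origin, while
`r⁻¹ dᵢ` is radial (`integral_radial_component`). For the second, the reflection `xᵢ ↦ -xᵢ` changes
the sign of the integrand (`integral_offdiag`).

The integrals may be split because `v`, its first derivatives and `D_r ū` are bounded, vanish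
outside a ball, and `r⁻¹` and `r⁻²` are locally integrable on `ℝ³` (`WBd.integrable`).
-/

open MeasureTheory Metric Real Filter

noncomputable section

/-- `ℝ³` as Euclidean space. -/
abbrev E3 : Type := EuclideanSpace ℝ (Fin 3)

/-- Partial derivative `∂ᵢ f` on `ℝ³`. -/
def pd (i : Fin 3) (f : E3 → ℝ) (x : E3) : ℝ :=
  fderiv ℝ f x (EuclideanSpace.single i 1)

/-- Laplacian on `ℝ³`. -/
def lap (f : E3 → ℝ) (x : E3) : ℝ := ∑ i, pd i (pd i f) x

/-- Divergence of a vector field on `ℝ³`. -/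
def divg (u : E3 → Fin 3 → ℝ) (x : E3) : ℝ := ∑ k, pd k (fun y => u y k) x

/-- The 3D Lamé operator `(Lu)ᵢ = -Δuᵢ - α ∂ᵢ (div u)`. -/
def lame (α : ℝ) (u : E3 → Fin 3 → ℝ) (x : E3) (i : Fin 3) : ℝ :=
  - lap (fun y => u y i) x - α * pd i (divg u) x

/-- The constant `c_α = (α+2)/(8π(α+1))`. -/
def cA (α : ℝ) : ℝ := (α + 2) / (8 * Real.pi * (α + 1))

/-- The fundamental matrix `Φ` of the 3D Lamé system:
`Φ_ij(x) = c_α |x|⁻¹ (δ_ij + (α/(α+2)) xᵢxⱼ/|x|²)`. -/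
def Phi (α : ℝ) (x : E3) (i j : Fin 3) : ℝ :=
  cA α * ‖x‖⁻¹ * ((if i = j then (1 : ℝ) else 0) + (α / (α + 2)) * (x i * x j) / ‖x‖ ^ 2)

/-- `u ∈ C₀^∞(U; ℝ³)`: smooth, compactly supported, with support inside `U`. -/
def IsTestOn (U : Set E3) (u : E3 → Fin 3 → ℝ) : Prop :=
  ContDiff ℝ (⊤ : ℕ∞) u ∧ HasCompactSupport u ∧ tsupport u ⊆ U

/-- `∫_{ℝ³} (Lu)·(Φ(·-y) u) dx`. -/
def lameEnergy (α : ℝ) (u : E3 → Fin 3 → ℝ) (y : E3) : ℝ :=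
  ∫ x : E3, ∑ i, ∑ j, lame α u x i * Phi α (x - y) i j * u x j

/-- The surface measure on the unit sphere `S² ⊂ ℝ³` (total mass `4π`). -/
def sphMeas : Measure (sphere (0 : E3) 1) := volume.toSphere

/-- `∫_{S²} f(rω) dσ(ω)`. -/
def sphInt (f : E3 → ℝ) (r : ℝ) : ℝ := ∫ ω : sphere (0 : E3) 1, f (r • (ω : E3)) ∂sphMeas

/-- `(ū, v)` is the spherical-mean decomposition of `u`:
`ūᵢ(r) = (1/(4π)) ∫_{S²} uᵢ(rω) dσ(ω)` and `uᵢ(x) = ūᵢ(|x|) + vᵢ(x)`. -/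
def IsSphericalMeanDecomp (u : E3 → Fin 3 → ℝ) (ub : Fin 3 → ℝ → ℝ)
    (v : E3 → Fin 3 → ℝ) : Prop :=
  (∀ i r, ub i r = (1 / (4 * Real.pi)) * sphInt (fun x => u x i) r) ∧
  (∀ x i, u x i = ub i ‖x‖ + v x i)

/-! ### Weighted integrability -/

/-- Measurable functions on `ℝ³` that are uniformly bounded on `ℝ³ \ {0}`. The origin is excluded
because `v` need not be differentiable there, so that `pd k v 0` may be a junk value. -/
def WBd (f : E3 → ℝ) : Prop := Measurable f ∧ ∃ C, ∀ x, x ≠ 0 → |f x| ≤ C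

lemma WBd.const (c : ℝ) : WBd (fun _ => c) := ⟨measurable_const, |c|, fun _ _ => le_rfl⟩

lemma WBd.add {f g : E3 → ℝ} (hf : WBd f) (hg : WBd g) : WBd (fun x => f x + g x) := by
  obtain ⟨mf, C, hC⟩ := hf
  obtain ⟨mg, D, hD⟩ := hg
  exact ⟨mf.add mg, C + D, fun x hx => (abs_add_le _ _).trans (add_le_add (hC x hx) (hD x hx))⟩

lemma WBd.mul {f g : E3 → ℝ} (hf : WBd f) (hg : WBd g) : WBd (fun x => f x * g x) := by
  obtain ⟨mf, C, hC⟩ := hf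
  obtain ⟨mg, D, hD⟩ := hg
  refine ⟨mf.mul mg, C * D, fun x hx => ?_⟩
  rw [abs_mul]
  exact mul_le_mul (hC x hx) (hD x hx) (abs_nonneg _) ((abs_nonneg _).trans (hC x hx))

lemma WBd.sub {f g : E3 → ℝ} (hf : WBd f) (hg : WBd g) : WBd (fun x => f x - g x) := by
  simpa [sub_eq_add_neg] using hf.add ((WBd.const (-1)).mul hg)

lemma WBd.pow {f : E3 → ℝ} (hf : WBd f) (n : ℕ) : WBd (fun x => f x ^ n) := by
  induction n with
  | zero => simpa using WBd.const 1
  | succ n ih => simpa [pow_succ] using ih.mul hf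

lemma WBd.sum {f : Fin 3 → E3 → ℝ} (hf : ∀ i, WBd (f i)) : WBd (fun x => ∑ i, f i x) := by
  simp only [Fin.sum_univ_three]
  exact ((hf 0).add (hf 1)).add (hf 2)

lemma abs_coord_le (x : E3) (i : Fin 3) : |x i| ≤ ‖x‖ := by
  simpa using PiLp.norm_apply_le x i

lemma WBd.omega (i : Fin 3) : WBd (fun x => x i / ‖x‖) := by
  refine ⟨by fun_prop, 1, fun x hx => ?_⟩
  rw [abs_div, abs_norm]
  exact div_le_one_of_le₀ (abs_coord_le x i) (norm_nonneg _)

/-- In dimension three the weights `r⁻¹` and `r⁻²` are locally integrable. -/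
lemma WBd.integrable {f : E3 → ℝ} (hf : WBd f) {R : ℝ} (hR : ∀ x, R < ‖x‖ → f x = 0)
    {n : ℕ} (hn : n ≤ 2) : Integrable (fun x => (‖x‖ ^ n)⁻¹ * f x) := by
  obtain ⟨mf, C, hC⟩ := hf
  have h1 : IntegrableOn (fun x : E3 => (‖x‖ ^ n)⁻¹) (ball 0 (R + 1)) := by
    rw [integrableOn_fun_norm_addHaar volume (f := fun y => (y ^ n)⁻¹)]
    have h2 : IntegrableOn (fun y : ℝ => y ^ (2 - n)) (Set.Ioo 0 (R + 1)) :=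
      ((continuous_pow _).integrableOn_Icc).mono_set Set.Ioo_subset_Icc_self
    refine h2.congr_fun (fun y hy => ?_) measurableSet_Ioo
    have : y ≠ 0 := hy.1.ne'
    simp only [finrank_euclideanSpace, Fintype.card_fin, smul_eq_mul]
    rw [show 3 - 1 = (2 - n) + n by omega, pow_add]
    field_simp
  have h3 : IntegrableOn (fun x : E3 => (‖x‖ ^ n)⁻¹ * f x) (ball 0 (R + 1)) := by
    refine Integrable.mul_bdd (c := C) h1 mf.aestronglyMeasurable ?_
    refine ae_restrict_of_ae ?_
    filter_upwards [Measure.ae_ne volume (0 : E3)] with x hx using hC x hx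
  refine (integrableOn_iff_integrable_of_support_subset ?_).1 h3
  intro x hx
  by_contra h
  apply hx
  have : R < ‖x‖ := by
    simp only [mem_ball, dist_zero_right, not_lt] at h
    linarith
  simp [hR x this]

/-! ### Spherical integrals and means -/

/-- Polar coordinates: an integrable function all of whose spherical integrals vanish has
vanishing integral. -/
lemma integral_eq_zero_of_sphInt {f : E3 → ℝ} (hf : Integrable f)
    (h : ∀ r, 0 < r → sphInt f r = 0) : ∫ x, f x = 0 := by
  set e := homeomorphUnitSphereProd E3 with he
  have mp := (volume : Measure E3).measurePreserving_homeomorphUnitSphereProd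
  have emb : MeasurableEmbedding e := Homeomorph.measurableEmbedding _
  let F : sphere (0 : E3) 1 × Set.Ioi (0 : ℝ) → ℝ := fun p => f ((p.2 : ℝ) • (p.1 : E3))
  have hFe : ∀ x : ({0}ᶜ : Set E3), F (e x) = f x := by
    intro x
    have hx : ‖(x : E3)‖ ≠ 0 := norm_ne_zero_iff.2 x.2
    simp [F, he, smul_smul, hx]
  have h0 : ∫ x, f x = ∫ p, F p ∂((volume : Measure E3).toSphere.prod
      (Measure.volumeIoiPow (Module.finrank ℝ E3 - 1))) := by
    rw [← mp.integral_comp emb F]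
    simp only [← he, hFe]
    rw [integral_subtype_comap (measurableSet_singleton _).compl f, restrict_compl_singleton]
  have hF : Integrable F ((volume : Measure E3).toSphere.prod
      (Measure.volumeIoiPow (Module.finrank ℝ E3 - 1))) := by
    rw [← mp.integrable_comp_emb emb]
    have : F ∘ e = f ∘ Subtype.val := funext hFe
    rw [← he, this, ← integrableOn_iff_comap_subtypeVal (measurableSet_singleton _).compl]
    exact hf.integrableOn
  rw [h0, integral_prod_symm F hF]
  have : ∀ r : Set.Ioi (0 : ℝ), ∫ ω, F (ω, r) ∂(volume : Measure E3).toSphere = 0 :=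
    fun r => h r r.2
  simp [this]

instance : IsFiniteMeasure sphMeas := by unfold sphMeas; infer_instance

lemma sphMeas_real_univ : sphMeas.real Set.univ = 4 * π := by
  rw [sphMeas, Measure.toSphere_real_apply_univ, Measure.real, EuclideanSpace.volume_ball_fin_three]
  rw [ENNReal.toReal_mul, ENNReal.toReal_ofReal (by positivity)]
  simp
  ring

lemma norm_sph (ω : sphere (0 : E3) 1) : ‖(ω : E3)‖ = 1 := by simp

lemma hasCompactSupport_of_vanish {g : E3 → ℝ} {R : ℝ} (hR : ∀ x, R < ‖x‖ → g x = 0) :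
    HasCompactSupport g :=
  HasCompactSupport.intro (isCompact_closedBall (0 : E3) R) fun x hx => hR x (by simpa using hx)

lemma fderiv_vanish {g : E3 → ℝ} {R : ℝ} (hR : ∀ x, R < ‖x‖ → g x = 0) {x : E3}
    (hx : R < ‖x‖) : fderiv ℝ g x = 0 := by
  have : g =ᶠ[nhds x] fun _ => 0 := by
    filter_upwards [(isOpen_lt continuous_const continuous_norm).mem_nhds hx] with y hy
      using hR y hy
  rw [this.fderiv_eq]
  simp

lemma exists_fderiv_bound {g : E3 → ℝ} (hg : ContDiff ℝ 1 g) {R : ℝ}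
    (hR : ∀ x, R < ‖x‖ → g x = 0) : ∃ C, ∀ x, ‖fderiv ℝ g x‖ ≤ C :=
  (hg.continuous_fderiv one_ne_zero).bounded_above_of_compact_support
    ((hasCompactSupport_of_vanish hR).fderiv (𝕜 := ℝ))

/-- Differentiation of spherical integrals under the integral sign. -/
lemma hasDerivAt_sphInt {g : E3 → ℝ} (hg : ContDiff ℝ 1 g) {R : ℝ}
    (hR : ∀ x, R < ‖x‖ → g x = 0) (r : ℝ) :
    HasDerivAt (sphInt g) (∫ ω : sphere (0 : E3) 1, fderiv ℝ g (r • (ω : E3)) ω ∂sphMeas) r := by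
  obtain ⟨C, hC⟩ := exists_fderiv_bound hg hR
  have hc := hg.continuous_fderiv one_ne_zero
  have hgc := hg.continuous
  refine (hasDerivAt_integral_of_dominated_loc_of_deriv_le (μ := sphMeas) (s := Set.univ)
    (F := fun r (ω : sphere (0 : E3) 1) => g (r • (ω : E3)))
    (F' := fun r (ω : sphere (0 : E3) 1) => fderiv ℝ g (r • (ω : E3)) ω) (bound := fun _ => C)
    Filter.univ_mem ?_ ?_ ?_ ?_ (integrable_const _) ?_).2
  · exact Eventually.of_forall fun r =>
      (by fun_prop : Continuous fun ω : sphere (0 : E3) 1 => g (r • (ω : E3))).aestronglyMeasurable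
  · exact (by fun_prop : Continuous fun ω : sphere (0 : E3) 1 => g (r • (ω : E3))).integrable_of_hasCompactSupport
      (HasCompactSupport.of_compactSpace _)
  · exact (by fun_prop : Continuous fun ω : sphere (0 : E3) 1 =>
      fderiv ℝ g (r • (ω : E3)) ω).aestronglyMeasurable
  · refine Eventually.of_forall fun ω s _ => ?_
    refine ((fderiv ℝ g (s • (ω : E3))).le_opNorm _).trans ?_
    rw [norm_sph, mul_one]
    exact hC _
  · refine Eventually.of_forall fun ω s _ => ?_
    have h1 : HasDerivAt (fun s : ℝ => s • (ω : E3)) (ω : E3) s := by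
      simpa using (hasDerivAt_id s).smul_const (ω : E3)
    exact ((hg.differentiable one_ne_zero).differentiableAt.hasFDerivAt).comp_hasDerivAt s h1

/-! ### Derivatives of the norm and of the fundamental matrix -/

lemma hasFDerivAt_norm_E3 {x : E3} (hx : x ≠ 0) :
    HasFDerivAt (fun z : E3 => ‖z‖) (‖x‖⁻¹ • innerSL ℝ x) x := by
  have h1 := (hasStrictFDerivAt_norm_sq x).hasFDerivAt.sqrt (by simpa using hx)
  have h2 : (fun z : E3 => √(‖z‖ ^ 2)) = fun z => ‖z‖ := by
    funext z; exact Real.sqrt_sq (norm_nonneg z)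
  rw [h2] at h1
  refine h1.congr_fderiv ?_
  rw [Real.sqrt_sq (norm_nonneg x)]
  ext y
  simp
  ring

lemma inner_single_E3 (x : E3) (i : Fin 3) : inner ℝ x (EuclideanSpace.single i (1 : ℝ)) = x i := by
  simp [EuclideanSpace.inner_single_right]

lemma sum_omega_sq {x : E3} (hx : x ≠ 0) : ∑ i, (x i / ‖x‖) ^ 2 = 1 := by
  have h : ‖x‖ ≠ 0 := norm_ne_zero_iff.2 hx
  have h2 : ‖x‖ ^ 2 = ∑ i, x i ^ 2 := by
    rw [EuclideanSpace.norm_sq_eq]; simp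
  simp only [div_pow]
  rw [← Finset.sum_div, ← h2, div_self (pow_ne_zero 2 h)]

/-- `∂ᵢ Φᵢⱼ` (no summation over `i`), in terms of `ω = x / |x|`. -/
lemma pd_Phi (α : ℝ) {x : E3} (hx : x ≠ 0) (i j : Fin 3) :
    pd i (fun z => Phi α z i j) x = cA α * (‖x‖ ^ 2)⁻¹ *
      (-(x i / ‖x‖) * (if i = j then (1 : ℝ) else 0) + (α / (α + 2)) *
        (x j / ‖x‖ + (x i / ‖x‖) * (if i = j then (1 : ℝ) else 0)
          - 3 * (x i / ‖x‖) ^ 2 * (x j / ‖x‖))) := by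
  have h : ‖x‖ ≠ 0 := norm_ne_zero_iff.2 hx
  have hN := hasFDerivAt_norm_E3 hx
  have hinv := (hasDerivAt_inv h).comp_hasFDerivAt x hN
  have hc : ∀ k : Fin 3, HasFDerivAt (fun z : E3 => z k) (EuclideanSpace.proj k : E3 →L[ℝ] ℝ) x :=
    fun k => (EuclideanSpace.proj k : E3 →L[ℝ] ℝ).hasFDerivAt
  have h3 := ((hasDerivAt_inv h).comp_hasFDerivAt x hN).const_mul (cA α)
  have h4 := ((((hc i).mul (hc j)).mul (hinv.pow 2)).const_mul (α / (α + 2))).const_add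
    (if i = j then (1 : ℝ) else 0)
  have h5 := h3.mul h4
  have h6 : (fun z => Phi α z i j) = fun z : E3 => cA α * ‖z‖⁻¹ *
      ((if i = j then (1 : ℝ) else 0) + (α / (α + 2)) * (z i * z j * (‖z‖⁻¹) ^ 2)) := by
    funext z
    simp only [Phi, div_eq_mul_inv, inv_pow]
    ring
  rw [pd, h6]
  have h7 := h5.fderiv
  simp only [Function.comp_def] at h7
  erw [h7]
  by_cases hij : i = j
  · subst hij
    simp [inner_single_E3]
    field_simp
    ring
  · have hji : ¬ j = i := fun h => hij h.symm
    simp [hij, hji, inner_single_E3]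
    field_simp
    ring

/-! ### One scalar component of the decomposition

Below `g`, `gb` and `w` are one component of `u`, `ū` and `v`: `gb` is the spherical mean of `g`,
and `g = gb(|·|) + w`. The function `g` vanishes outside the ball of radius `R`. -/

lemma spherical_hasDerivAt {g : E3 → ℝ} (hg : ContDiff ℝ 1 g) {R : ℝ}
    (hR : ∀ x, R < ‖x‖ → g x = 0) {gb : ℝ → ℝ} (hgb : ∀ r, gb r = (1 / (4 * π)) * sphInt g r)
    (r : ℝ) : HasDerivAt gb
      ((1 / (4 * π)) * ∫ ω : sphere (0 : E3) 1, fderiv ℝ g (r • (ω : E3)) ω ∂sphMeas) r := by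
  rw [show gb = fun r => (1 / (4 * π)) * sphInt g r from funext hgb]
  exact (hasDerivAt_sphInt hg hR r).const_mul _

lemma fderiv_component {g : E3 → ℝ} (hg : ContDiff ℝ 1 g) {R : ℝ}
    (hR : ∀ x, R < ‖x‖ → g x = 0) {gb : ℝ → ℝ} (hgb : ∀ r, gb r = (1 / (4 * π)) * sphInt g r)
    {w : E3 → ℝ} (hw : ∀ x, g x = gb ‖x‖ + w x) {x : E3} (hx : x ≠ 0) :
    fderiv ℝ w x = fderiv ℝ g x - (deriv gb ‖x‖ * ‖x‖⁻¹) • innerSL ℝ x := by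
  have h1 : w = fun x => g x - gb ‖x‖ := by funext x; rw [hw x]; ring
  have h2 := (spherical_hasDerivAt hg hR hgb ‖x‖).differentiableAt.hasDerivAt.comp_hasFDerivAt x
    (hasFDerivAt_norm_E3 hx)
  have h3 := ((hg.differentiable one_ne_zero) x).hasFDerivAt.sub h2
  rw [smul_smul] at h3
  rw [h1]
  exact h3.fderiv

lemma pd_component {g : E3 → ℝ} (hg : ContDiff ℝ 1 g) {R : ℝ}
    (hR : ∀ x, R < ‖x‖ → g x = 0) {gb : ℝ → ℝ} (hgb : ∀ r, gb r = (1 / (4 * π)) * sphInt g r)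
    {w : E3 → ℝ} (hw : ∀ x, g x = gb ‖x‖ + w x) {x : E3} (hx : x ≠ 0) (k : Fin 3) :
    pd k g x = pd k w x + deriv gb ‖x‖ * (x k / ‖x‖) := by
  simp only [pd, fderiv_component hg hR hgb hw hx]
  simp [inner_single_E3]
  ring

lemma sphInt_vanish {g : E3 → ℝ} {R : ℝ} (hR : ∀ x, R < ‖x‖ → g x = 0) {r : ℝ} (hr : R < |r|) :
    sphInt g r = 0 := by
  have : ∀ ω : sphere (0 : E3) 1, g (r • (ω : E3)) = 0 := fun ω => by
    apply hR
    rwa [norm_smul, norm_sph, mul_one, Real.norm_eq_abs]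
  simp [sphInt, this]

lemma deriv_sphMean_vanish {g : E3 → ℝ} (hg : ContDiff ℝ 1 g) {R : ℝ}
    (hR : ∀ x, R < ‖x‖ → g x = 0) {gb : ℝ → ℝ} (hgb : ∀ r, gb r = (1 / (4 * π)) * sphInt g r)
    {r : ℝ} (hr : R < |r|) : deriv gb r = 0 := by
  have : ∀ ω : sphere (0 : E3) 1, fderiv ℝ g (r • (ω : E3)) = 0 := fun ω => by
    apply fderiv_vanish hR
    rwa [norm_smul, norm_sph, mul_one, Real.norm_eq_abs]
  rw [(spherical_hasDerivAt hg hR hgb r).deriv]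
  simp [this]

lemma WBd.deriv_sphMean {g : E3 → ℝ} (hg : ContDiff ℝ 1 g) {R : ℝ}
    (hR : ∀ x, R < ‖x‖ → g x = 0) {gb : ℝ → ℝ} (hgb : ∀ r, gb r = (1 / (4 * π)) * sphInt g r) :
    WBd (fun x => deriv gb ‖x‖) := by
  obtain ⟨C, hC⟩ := exists_fderiv_bound hg hR
  refine ⟨(measurable_deriv gb).comp measurable_norm,
    |1 / (4 * π)| * (C * sphMeas.real Set.univ), fun x _ => ?_⟩
  beta_reduce
  rw [(spherical_hasDerivAt hg hR hgb ‖x‖).deriv, abs_mul]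
  gcongr
  have hb : ∀ ω : sphere (0 : E3) 1, ‖fderiv ℝ g (‖x‖ • (ω : E3)) ω‖ ≤ C := fun ω => by
    refine ((fderiv ℝ g (‖x‖ • (ω : E3))).le_opNorm _).trans ?_
    rw [norm_sph, mul_one]
    exact hC _
  exact norm_integral_le_of_norm_le_const (Eventually.of_forall hb)

lemma WBd.component {g : E3 → ℝ} (hg : ContDiff ℝ 1 g) {R : ℝ}
    (hR : ∀ x, R < ‖x‖ → g x = 0) {gb : ℝ → ℝ} (hgb : ∀ r, gb r = (1 / (4 * π)) * sphInt g r)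
    {w : E3 → ℝ} (hw : ∀ x, g x = gb ‖x‖ + w x) : WBd w := by
  obtain ⟨C, hC⟩ := hg.continuous.bounded_above_of_compact_support (hasCompactSupport_of_vanish hR)
  have hcont : Continuous gb := continuous_iff_continuousAt.2 fun r =>
    (spherical_hasDerivAt hg hR hgb r).continuousAt
  have hmean : WBd (fun x => gb ‖x‖) := by
    refine ⟨(hcont.comp continuous_norm).measurable,
      |1 / (4 * π)| * (C * sphMeas.real Set.univ), fun x _ => ?_⟩
    beta_reduce
    rw [hgb, abs_mul]
    gcongr
    exact norm_integral_le_of_norm_le_const (Eventually.of_forall fun ω => hC _)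
  have hgW : WBd g := ⟨hg.continuous.measurable, C, fun x _ => hC x⟩
  have h1 : w = fun x => g x - gb ‖x‖ := by funext x; rw [hw x]; ring
  rw [h1]
  exact hgW.sub hmean

lemma WBd.pd_component {g : E3 → ℝ} (hg : ContDiff ℝ 1 g) {R : ℝ}
    (hR : ∀ x, R < ‖x‖ → g x = 0) {gb : ℝ → ℝ} (hgb : ∀ r, gb r = (1 / (4 * π)) * sphInt g r)
    {w : E3 → ℝ} (hw : ∀ x, g x = gb ‖x‖ + w x) (k : Fin 3) : WBd (pd k w) := by
  refine ⟨measurable_fderiv_apply_const ℝ w _, ?_⟩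
  obtain ⟨C, hC⟩ := exists_fderiv_bound hg hR
  obtain ⟨-, D, hD⟩ := (WBd.deriv_sphMean hg hR hgb).mul (WBd.omega k)
  refine ⟨C + D, fun x hx => ?_⟩
  rw [eq_sub_of_add_eq (_root_.pd_component hg hR hgb hw hx k).symm]
  refine (abs_sub _ _).trans (add_le_add ?_ (hD x hx))
  refine ((fderiv ℝ g x).le_opNorm _).trans ?_
  simpa using hC x

lemma component_vanish {g : E3 → ℝ} {R : ℝ}
    (hR : ∀ x, R < ‖x‖ → g x = 0) {gb : ℝ → ℝ} (hgb : ∀ r, gb r = (1 / (4 * π)) * sphInt g r)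
    {w : E3 → ℝ} (hw : ∀ x, g x = gb ‖x‖ + w x) (x : E3) (hx : R < ‖x‖) : w x = 0 := by
  have := hw x
  rw [hR x hx, hgb, sphInt_vanish hR (by rwa [abs_norm])] at this
  simpa using this.symm

/-- Since `w` has zero spherical means, so has `∂ᵣ w`; hence it is orthogonal to radial functions. -/
lemma integral_radial_component {g : E3 → ℝ} (hg : ContDiff ℝ 1 g) {R : ℝ}
    (hR : ∀ x, R < ‖x‖ → g x = 0) {gb : ℝ → ℝ} (hgb : ∀ r, gb r = (1 / (4 * π)) * sphInt g r)
    {w : E3 → ℝ} (hw : ∀ x, g x = gb ‖x‖ + w x) :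
    Integrable (fun x => ‖x‖⁻¹ * (deriv gb ‖x‖ * ∑ k, x k / ‖x‖ * pd k w x)) ∧
    ∫ x, ‖x‖⁻¹ * (deriv gb ‖x‖ * ∑ k, x k / ‖x‖ * pd k w x) = 0 := by
  have hInt : Integrable (fun x => ‖x‖⁻¹ * (deriv gb ‖x‖ * ∑ k, x k / ‖x‖ * pd k w x)) := by
    have h := ((WBd.deriv_sphMean hg hR hgb).mul
      (WBd.sum fun k => (WBd.omega k).mul (WBd.pd_component hg hR hgb hw k))).integrable
      (R := R) (n := 1) (fun x hx => by
        rw [deriv_sphMean_vanish hg hR hgb (by rwa [abs_norm]), zero_mul]) (by norm_num)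
    simpa only [pow_one] using h
  refine ⟨hInt, integral_eq_zero_of_sphInt hInt fun r hr => ?_⟩
  have hpt : ∀ ω : sphere (0 : E3) 1,
      ‖r • (ω : E3)‖⁻¹ * (deriv gb ‖r • (ω : E3)‖ *
        ∑ k, (r • (ω : E3)) k / ‖r • (ω : E3)‖ * pd k w (r • (ω : E3))) =
      (r⁻¹ * deriv gb r) * (fderiv ℝ g (r • (ω : E3)) ω - deriv gb r) := by
    intro ω
    have hn : ‖r • (ω : E3)‖ = r := by
      rw [norm_smul, norm_sph, mul_one, Real.norm_eq_abs, abs_of_pos hr]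
    have hne : r • (ω : E3) ≠ 0 := by
      rw [← norm_ne_zero_iff, hn]; exact hr.ne'
    have hsum : ∑ k, (ω : E3) k * pd k g (r • (ω : E3)) = fderiv ℝ g (r • (ω : E3)) ω := by
      have hb : (ω : E3) = ∑ k, (ω : E3) k • EuclideanSpace.single k (1 : ℝ) := by
        ext j
        simp [Finset.sum_apply, Pi.single_apply]
      rw [congrArg (fderiv ℝ g (r • (ω : E3))) hb]
      simp [pd]
    have hsq := sum_omega_sq hne
    rw [hn] at hsq ⊢
    have hk : ∀ k, (r • (ω : E3)) k / r = (ω : E3) k := fun k => by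
      simp [hr.ne']
    simp only [hk] at hsq ⊢
    rw [mul_assoc, ← hsum]
    congr 2
    have : ∀ k, pd k w (r • (ω : E3)) = pd k g (r • (ω : E3)) - deriv gb r * (ω : E3) k := by
      intro k
      rw [pd_component hg hR hgb hw hne k, hn, hk]; ring
    simp only [this, mul_sub, Finset.sum_sub_distrib]
    congr 1
    calc ∑ k, (ω : E3) k * (deriv gb r * (ω : E3) k) = deriv gb r * ∑ k, (ω : E3) k ^ 2 := by
          rw [Finset.mul_sum]; exact Finset.sum_congr rfl fun k _ => by ring
      _ = deriv gb r := by rw [hsq, mul_one]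
  simp only [sphInt, hpt]
  have hc := hg.continuous_fderiv one_ne_zero
  have hi : Integrable (fun ω : sphere (0 : E3) 1 => fderiv ℝ g (r • (ω : E3)) ω) sphMeas :=
    (by fun_prop : Continuous fun ω : sphere (0 : E3) 1 =>
      fderiv ℝ g (r • (ω : E3)) ω).integrable_of_hasCompactSupport
        (HasCompactSupport.of_compactSpace _)
  rw [integral_const_mul, integral_sub hi (integrable_const _), integral_const, sphMeas_real_univ]
  have hd := (spherical_hasDerivAt hg hR hgb r).deriv
  have : ∫ ω : sphere (0 : E3) 1, fderiv ℝ g (r • (ω : E3)) ω ∂sphMeas = 4 * π * deriv gb r := by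
    rw [hd]; field_simp
  rw [this]
  simp

/-! ### Off-diagonal moments -/

/-- The reflection `xᵢ ↦ -xᵢ` shows that off-diagonal second moments of a radial density vanish. -/
lemma integral_offdiag (φ : ℝ → ℝ) {i j : Fin 3} (hij : i ≠ j) :
    ∫ x : E3, φ ‖x‖ * (x i * x j) = 0 := by
  let T : E3 ≃ₗᵢ[ℝ] E3 := LinearIsometryEquiv.piLpCongrRight 2
    (fun k => if k = i then LinearIsometryEquiv.neg ℝ else LinearIsometryEquiv.refl ℝ ℝ)
  have hTi : ∀ x : E3, T x i = - x i := fun x => by simp [T]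
  have hTj : ∀ x : E3, T x j = x j := fun x => by simp [T, hij.symm]
  have h := T.measurePreserving.integral_comp T.toHomeomorph.measurableEmbedding
    (fun x : E3 => φ ‖x‖ * (x i * x j))
  simp only [LinearIsometryEquiv.norm_map, hTi, hTj] at h
  have h2 : ∫ x : E3, φ ‖x‖ * (-x i * x j) = - ∫ x : E3, φ ‖x‖ * (x i * x j) := by
    rw [← integral_neg]
    congr 1; funext x; ring
  linarith

/-! ### Pointwise algebra and conclusion -/

/-- The `r⁻¹`-bracket of the polar formula, as a function of `d = D_r ū`, `ω` and
`A k j = ∂ₖ vⱼ`. -/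
def polarH (α : ℝ) (d ω : Fin 3 → ℝ) (A : Fin 3 → Fin 3 → ℝ) : ℝ :=
  (∑ i, (d i) ^ 2) +
    α * ((2 * α + 3) / (α + 2)) * (∑ i, (d i) ^ 2 * (ω i) ^ 2) +
    (∑ i, ∑ k, (A k i) ^ 2) +
    α * (∑ k, A k k) ^ 2 +
    (α / (α + 2)) * (∑ k, (∑ j, A k j * ω j) ^ 2) +
    (α ^ 2 / (α + 2)) * (∑ k, A k k) * (∑ i, ω i * ∑ j, A i j * ω j) +
    α * ((3 * α + 4) / (α + 2)) * (∑ i, d i * ω i) * (∑ k, A k k) +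
    α * (∑ i, d i * ω i) * (∑ i, ω i * ∑ j, A i j * ω j)

/-- Expansion of the quadratic form at `∂ₖ uᵢ = ∂ₖ vᵢ + dᵢ ωₖ`: the bracket of the polar formula
plus two remainders, the radial derivatives of `v` and the off-diagonal products `dᵢ dⱼ ωᵢ ωⱼ`. -/
lemma quadratic_expansion (α : ℝ) (hα : α + 2 ≠ 0) (d ω : Fin 3 → ℝ) (A : Fin 3 → Fin 3 → ℝ)
    (hω : ∑ i, ω i ^ 2 = 1) :
    ∑ i, ∑ j, ∑ k, ((A k i + d i * ω k) * (A k j + d j * ω k) +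
        α * (A k k + d k * ω k) * (A i j + d j * ω i)) *
      ((if i = j then (1 : ℝ) else 0) + (α / (α + 2)) * (ω i * ω j)) =
    polarH α d ω A + 2 * (∑ i, d i * ∑ k, ω k * A k i) +
      α * ((2 * α + 3) / (α + 2)) * (2 * (d 0 * d 1 * (ω 0 * ω 1) + d 0 * d 2 * (ω 0 * ω 2) +
        d 1 * d 2 * (ω 1 * ω 2))) := by
  unfold polarH
  obtain ⟨β, hβ⟩ : ∃ β, β = α / (α + 2) := ⟨_, rfl⟩
  have h1 : α * ((2 * α + 3) / (α + 2)) = β + α + α * β := by rw [hβ]; field_simp; ring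
  have h2 : α ^ 2 / (α + 2) = α * β := by rw [hβ]; field_simp
  have h3 : α * ((3 * α + 4) / (α + 2)) = 2 * α + α * β := by rw [hβ]; field_simp; ring
  have h4 : α = 2 * β + α * β := by rw [hβ]; field_simp; ring
  rw [h1, h2, h3, ← hβ]
  -- The coefficient of the last product in `polarH` is `α = 2β + αβ`.
  have h5 : α * (∑ i, d i * ω i) * (∑ i, ω i * ∑ j, A i j * ω j) =
      (2 * β + α * β) * (∑ i, d i * ω i) * (∑ i, ω i * ∑ j, A i j * ω j) := by rw [← h4]
  rw [h5]
  clear h1 h2 h3 h4 h5 hβ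
  simp only [Fin.sum_univ_three] at hω ⊢
  simp only [Fin.reduceEq, if_true, if_false]
  linear_combination (d 0 ^ 2 + d 1 ^ 2 + d 2 ^ 2 +
    (β + α * β) * (d 0 * ω 0 + d 1 * ω 1 + d 2 * ω 2) ^ 2 +
    α * β * (d 0 * ω 0 + d 1 * ω 1 + d 2 * ω 2) * (A 0 0 + A 1 1 + A 2 2)) * hω

/-- The identity `½ α Σᵢ ∂ᵢ Φᵢⱼ = -c_α (α / (α + 2)) r⁻² ωⱼ`, contracted with
`Σₖ (wⱼ ∂ₖwₖ - wₖ ∂ₖwⱼ)`; here `A k j` stands for `∂ₖ wⱼ`. -/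
lemma first_order_expansion (α : ℝ) (hα : α + 2 ≠ 0) (c r : ℝ) (w ω : Fin 3 → ℝ)
    (A : Fin 3 → Fin 3 → ℝ) (hω : ∑ i, ω i ^ 2 = 1) :
    α / 2 * ∑ i, ∑ j, ∑ k, (w j * A k k - w k * A k j) *
      (c * (r ^ 2)⁻¹ * (-(ω i) * (if i = j then (1 : ℝ) else 0) + (α / (α + 2)) *
        (ω j + ω i * (if i = j then (1 : ℝ) else 0) - 3 * (ω i) ^ 2 * ω j))) =
    c * ((α / (α + 2)) * (r ^ 2)⁻¹ *
      ((∑ k, w k * ∑ j, A k j * ω j) - (∑ k, A k k) * ∑ j, w j * ω j)) := by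
  obtain ⟨β, hβ⟩ : ∃ β, β = α / (α + 2) := ⟨_, rfl⟩
  have h4 : α = 2 * β + α * β := by rw [hβ]; field_simp; ring
  rw [← hβ]
  clear hβ
  have hj : ∀ j : Fin 3, ∑ i, (-(ω i) * (if i = j then (1 : ℝ) else 0) + β *
      (ω j + ω i * (if i = j then (1 : ℝ) else 0) - 3 * (ω i) ^ 2 * ω j)) = (β - 1) * ω j := by
    intro j
    have e : ∀ i, (-(ω i) * (if i = j then (1 : ℝ) else 0) + β *
      (ω j + ω i * (if i = j then (1 : ℝ) else 0) - 3 * (ω i) ^ 2 * ω j)) =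
        (β - 1) * (ω i * (if i = j then (1 : ℝ) else 0)) + β * ω j - 3 * β * ω j * ω i ^ 2 := by
      intro i; ring
    simp only [e, Finset.sum_sub_distrib, Finset.sum_add_distrib, ← Finset.mul_sum, hω]
    simp
    ring
  have h6 : ∀ j, ∑ i, ∑ k, (w j * A k k - w k * A k j) *
      (c * (r ^ 2)⁻¹ * (-(ω i) * (if i = j then (1 : ℝ) else 0) + β *
        (ω j + ω i * (if i = j then (1 : ℝ) else 0) - 3 * (ω i) ^ 2 * ω j))) =
      (∑ k, (w j * A k k - w k * A k j)) * (c * (r ^ 2)⁻¹) * ((β - 1) * ω j) := by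
    intro j
    rw [← hj j, Finset.mul_sum]
    refine Finset.sum_congr rfl fun i _ => ?_
    rw [← Finset.sum_mul]
    ring
  rw [Finset.sum_comm]
  rw [Finset.sum_congr rfl fun j _ => h6 j]
  simp only [Fin.sum_univ_three]
  generalize (r ^ 2)⁻¹ = s
  -- Here `α (β - 1) / 2 = -β`.
  have h7 : α / 2 * (β - 1) = -β := by linarith
  linear_combination ((w 0 * A 0 0 - w 0 * A 0 0 + (w 0 * A 1 1 - w 1 * A 1 0) +
    (w 0 * A 2 2 - w 2 * A 2 0)) * ω 0 + ((w 1 * A 0 0 - w 0 * A 0 1) +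
    (w 1 * A 2 2 - w 2 * A 2 1)) * ω 1 + ((w 2 * A 0 0 - w 0 * A 0 2) +
    (w 2 * A 1 1 - w 1 * A 1 2)) * ω 2) * (c * s) * h7

/-- Explicit formula for the bilinear form `B*(u,u)` in polar-type quantities,
where `r = |x|`, `ωᵢ = xᵢ/|x|`, `D_r ūᵢ = (ūᵢ)'(r)`. -/
theorem lame_bilinear_form_polar_formula
    (α : ℝ) (hα : -1 < α)
    (u : E3 → Fin 3 → ℝ) (hu : IsTestOn Set.univ u)
    (ub : Fin 3 → ℝ → ℝ) (v : E3 → Fin 3 → ℝ)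
    (hdec : IsSphericalMeanDecomp u ub v) :
    ((α / 2) * ∫ x : E3, ∑ i, ∑ j, ∑ k,
        (v x j * pd k (fun z => v z k) x - v x k * pd k (fun z => v z j) x) *
          pd i (fun z => Phi α z i j) x) +
    (∫ x : E3, ∑ i, ∑ j, ∑ k,
        (pd k (fun z => u z i) x * pd k (fun z => u z j) x +
          α * pd k (fun z => u z k) x * pd i (fun z => u z j) x) * Phi α x i j) =
    cA α * ∫ x : E3,
      ((α / (α + 2)) * (‖x‖ ^ 2)⁻¹ *
        ((∑ k, v x k * ∑ j, pd k (fun z => v z j) x * (x j / ‖x‖)) -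
          divg v x * ∑ j, v x j * (x j / ‖x‖)) +
      ‖x‖⁻¹ *
        ((∑ i, (deriv (ub i) ‖x‖) ^ 2) +
          α * ((2 * α + 3) / (α + 2)) * (∑ i, (deriv (ub i) ‖x‖) ^ 2 * (x i / ‖x‖) ^ 2) +
          (∑ i, ∑ k, (pd k (fun z => v z i) x) ^ 2) +
          α * (divg v x) ^ 2 +
          (α / (α + 2)) * (∑ k, (∑ j, pd k (fun z => v z j) x * (x j / ‖x‖)) ^ 2) +
          (α ^ 2 / (α + 2)) * divg v x *
            (∑ i, (x i / ‖x‖) * ∑ j, pd i (fun z => v z j) x * (x j / ‖x‖)) +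
          α * ((3 * α + 4) / (α + 2)) * (∑ i, deriv (ub i) ‖x‖ * (x i / ‖x‖)) * divg v x +
          α * (∑ i, deriv (ub i) ‖x‖ * (x i / ‖x‖)) *
            (∑ i, (x i / ‖x‖) * ∑ j, pd i (fun z => v z j) x * (x j / ‖x‖)))) := by
  have hα2 : α + 2 ≠ 0 := by linarith
  obtain ⟨hsm, hcs, -⟩ := hu
  obtain ⟨hub, hv⟩ := hdec
  have hg : ∀ i, ContDiff ℝ 1 (fun x : E3 => u x i) := fun i =>
    (contDiff_pi.1 hsm i).of_le (by exact_mod_cast le_top)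
  obtain ⟨R, hR'⟩ := hcs.isCompact.isBounded.subset_closedBall (0 : E3)
  have hR : ∀ i (x : E3), R < ‖x‖ → u x i = 0 := by
    intro i x hx
    have : x ∉ tsupport u := fun h => by
      have := hR' h
      simp only [mem_closedBall, dist_zero_right] at this
      linarith
    rw [image_eq_zero_of_notMem_tsupport this]; rfl
  have hw : ∀ i (x : E3), u x i = ub i ‖x‖ + v x i := fun i x => hv x i
  have hd : ∀ i, WBd (fun x : E3 => deriv (ub i) ‖x‖) := fun i =>
    WBd.deriv_sphMean (hg i) (hR i) (hub i)
  have hvB : ∀ i, WBd (fun x : E3 => v x i) := fun i =>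
    WBd.component (hg i) (hR i) (hub i) (hw i)
  have hA : ∀ k i, WBd (fun x : E3 => pd k (fun z => v z i) x) := fun k i =>
    WBd.pd_component (hg i) (hR i) (hub i) (hw i) k
  have hd0 : ∀ i (x : E3), R < ‖x‖ → deriv (ub i) ‖x‖ = 0 := fun i x hx =>
    deriv_sphMean_vanish (hg i) (hR i) (hub i) (by rwa [abs_norm])
  have hv0 : ∀ i (x : E3), R < ‖x‖ → v x i = 0 := fun i =>
    component_vanish (hR i) (hub i) (hw i)
  have hA0 : ∀ k i (x : E3), R < ‖x‖ → pd k (fun z => v z i) x = 0 := fun k i x hx => by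
    rw [pd, fderiv_vanish (hv0 i) hx]; rfl
  -- The two weighted integrands of the right-hand side.
  let P : E3 → ℝ := fun x => (∑ k, v x k * ∑ j, pd k (fun z => v z j) x * (x j / ‖x‖)) -
    (∑ k, pd k (fun z => v z k) x) * ∑ j, v x j * (x j / ‖x‖)
  let H : E3 → ℝ := fun x => polarH α (fun i => deriv (ub i) ‖x‖) (fun i => x i / ‖x‖)
    (fun k j => pd k (fun z => v z j) x)
  have hP : WBd P :=
    (WBd.sum fun k => (hvB k).mul (WBd.sum fun j => (hA k j).mul (WBd.omega j))).sub
      ((WBd.sum fun k => hA k k).mul (WBd.sum fun j => (hvB j).mul (WBd.omega j)))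
  have hP0 : ∀ x : E3, R < ‖x‖ → P x = 0 := fun x hx => by
    simp [P, hv0 _ x hx]
  have hH : WBd H := by
    have hdiv : WBd (fun x : E3 => ∑ k, pd k (fun z => v z k) x) := WBd.sum fun k => hA k k
    have hdw : WBd (fun x : E3 => ∑ i, deriv (ub i) ‖x‖ * (x i / ‖x‖)) :=
      WBd.sum fun i => (hd i).mul (WBd.omega i)
    have hAw : ∀ k, WBd (fun x : E3 => ∑ j, pd k (fun z => v z j) x * (x j / ‖x‖)) := fun k =>
      WBd.sum fun j => (hA k j).mul (WBd.omega j)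
    have hwA : WBd (fun x : E3 => ∑ i, (x i / ‖x‖) * ∑ j, pd i (fun z => v z j) x * (x j / ‖x‖)) :=
      WBd.sum fun i => (WBd.omega i).mul (hAw i)
    exact (((((((WBd.sum fun i => (hd i).pow 2).add
      ((WBd.const _).mul (WBd.sum fun i => ((hd i).pow 2).mul ((WBd.omega i).pow 2)))).add
      (WBd.sum fun i => WBd.sum fun k => (hA k i).pow 2)).add
      ((WBd.const _).mul (hdiv.pow 2))).add
      ((WBd.const _).mul (WBd.sum fun k => (hAw k).pow 2))).add
      (((WBd.const _).mul hdiv).mul hwA)).add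
      (((WBd.const _).mul hdw).mul hdiv)).add
      (((WBd.const _).mul hdw).mul hwA)
  have hH0 : ∀ x : E3, R < ‖x‖ → H x = 0 := fun x hx => by
    simp [H, polarH, hd0 _ x hx, hA0 _ _ x hx]
  have iP : Integrable (fun x : E3 => (α / (α + 2)) * (‖x‖ ^ 2)⁻¹ * P x) := by
    simpa only [mul_assoc] using (hP.integrable hP0 le_rfl).const_mul (α / (α + 2))
  have iH : Integrable (fun x : E3 => ‖x‖⁻¹ * H x) := by
    simpa only [pow_one] using hH.integrable hH0 one_le_two
  -- The remainder terms have vanishing integral.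
  have hX := fun i => integral_radial_component (hg i) (hR i) (hub i) (hw i)
  let X : Fin 3 → E3 → ℝ := fun i x =>
    ‖x‖⁻¹ * (deriv (ub i) ‖x‖ * ∑ k, x k / ‖x‖ * pd k (fun z => v z i) x)
  let Y : Fin 3 → Fin 3 → E3 → ℝ := fun i j x =>
    ‖x‖⁻¹ * (deriv (ub i) ‖x‖ * deriv (ub j) ‖x‖ * ((x i / ‖x‖) * (x j / ‖x‖)))
  have iY : ∀ i j, Integrable (Y i j) := fun i j => by
    have := (((hd i).mul (hd j)).mul ((WBd.omega i).mul (WBd.omega j))).integrable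
      (R := R) (n := 1) (fun x hx => by simp [hd0 _ x hx]) one_le_two
    simpa only [pow_one] using this
  have zY : ∀ i j, i ≠ j → ∫ x : E3, Y i j x = 0 := fun i j hij => by
    rw [← integral_offdiag (fun r => r⁻¹ * (deriv (ub i) r * deriv (ub j) r) * (r⁻¹ * r⁻¹)) hij]
    refine integral_congr_ae (Eventually.of_forall fun x => ?_)
    simp only [Y, div_eq_mul_inv]
    ring
  have iX : ∀ i, Integrable (X i) := fun i => (hX i).1
  have zX : ∀ i, ∫ x : E3, X i x = 0 := fun i => (hX i).2
  have hne := Measure.ae_ne (volume : Measure E3) (0 : E3)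
  have first : (α / 2) * ∫ x : E3, ∑ i, ∑ j, ∑ k,
        (v x j * pd k (fun z => v z k) x - v x k * pd k (fun z => v z j) x) *
          pd i (fun z => Phi α z i j) x =
      cA α * ∫ x : E3, (α / (α + 2)) * (‖x‖ ^ 2)⁻¹ * P x := by
    rw [← integral_const_mul, ← integral_const_mul]
    refine integral_congr_ae ?_
    filter_upwards [hne] with x hx
    simp only [pd_Phi α hx]
    exact first_order_expansion α hα2 (cA α) ‖x‖ (v x) (fun i => x i / ‖x‖)
      (fun k j => pd k (fun z => v z j) x) (sum_omega_sq hx)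
  have second : (∫ x : E3, ∑ i, ∑ j, ∑ k,
        (pd k (fun z => u z i) x * pd k (fun z => u z j) x +
          α * pd k (fun z => u z k) x * pd i (fun z => u z j) x) * Phi α x i j) =
      cA α * ∫ x : E3, ‖x‖⁻¹ * H x := by
    have hae : ∀ᵐ x : E3, ∑ i, ∑ j, ∑ k,
        (pd k (fun z => u z i) x * pd k (fun z => u z j) x +
          α * pd k (fun z => u z k) x * pd i (fun z => u z j) x) * Phi α x i j =
        cA α * (‖x‖⁻¹ * H x + (2 * (X 0 x + X 1 x + X 2 x) +
          α * ((2 * α + 3) / (α + 2)) * (2 * (Y 0 1 x + Y 0 2 x + Y 1 2 x)))) := by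
      filter_upwards [hne] with x hx
      have hpd : ∀ k i, pd k (fun z => u z i) x = pd k (fun z => v z i) x +
          deriv (ub i) ‖x‖ * (x k / ‖x‖) := fun k i =>
        pd_component (hg i) (hR i) (hub i) (hw i) hx k
      have hPhi : ∀ i j, Phi α x i j = cA α * ‖x‖⁻¹ * ((if i = j then (1 : ℝ) else 0) +
          (α / (α + 2)) * ((x i / ‖x‖) * (x j / ‖x‖))) := fun i j => by
        simp only [Phi, div_eq_mul_inv, mul_inv, pow_two]
        ring
      have hq := quadratic_expansion α hα2 (fun i => deriv (ub i) ‖x‖) (fun i => x i / ‖x‖)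
        (fun k j => pd k (fun z => v z j) x) (sum_omega_sq hx)
      simp only [hpd, hPhi]
      simp only [mul_left_comm _ (cA α * ‖x‖⁻¹), ← Finset.mul_sum]
      rw [hq]
      simp only [X, Y, H, Fin.sum_univ_three]
      ring
    rw [integral_congr_ae hae, integral_const_mul]
    have i1 : Integrable (fun x : E3 => 2 * (X 0 x + X 1 x + X 2 x)) :=
      (((iX 0).add (iX 1)).add (iX 2)).const_mul 2
    have i2 : Integrable (fun x : E3 => α * ((2 * α + 3) / (α + 2)) *
        (2 * (Y 0 1 x + Y 0 2 x + Y 1 2 x))) :=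
      ((((iY 0 1).add (iY 0 2)).add (iY 1 2)).const_mul 2).const_mul _
    have z1 : ∫ x : E3, 2 * (X 0 x + X 1 x + X 2 x) = 0 := by
      rw [integral_const_mul, integral_add ((iX 0).fun_add (iX 1)) (iX 2),
        integral_add (iX 0) (iX 1), zX, zX, zX]
      simp
    have z2 : ∫ x : E3, α * ((2 * α + 3) / (α + 2)) * (2 * (Y 0 1 x + Y 0 2 x + Y 1 2 x)) = 0 := by
      rw [integral_const_mul, integral_const_mul,
        integral_add ((iY 0 1).fun_add (iY 0 2)) (iY 1 2), integral_add (iY 0 1) (iY 0 2),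
        zY 0 1 (by decide), zY 0 2 (by decide), zY 1 2 (by decide)]
      simp
    rw [integral_add iH (i1.fun_add i2), integral_add i1 i2, z1, z2]
    simp
  rw [first, second, ← mul_add, ← integral_add iP iH]
  rfl
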